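/- arXiv:1711.11075 — 5 statements merged into one kernel-verified Lean document; each statement's English description precedes it below -/
import Mathlib

section
/- Let Φ be a real m×n matrix, z ∈ ℝᵐ, and D a real d×n matrix. Let F : ℝᵈ → ℝ and 𝓕 : ℝᵈ → ℝ be functions, let λ > λ' > 0, and let ū, ū' ∈ ℝⁿ. Assume: (i) 𝓕(Dū) = F(Dū) (the majorizer is exact at ū); (ii) 𝓕(w) ≥ F(w) for every w ∈ ℝᵈ; (iii) F(Dū) > 0; and (iv) ū' is a global minimizer of u ↦ λ'·𝓕(Du) + (1/2)‖Φu − z‖₂². Then λ·F(Dū) + (1/2)‖Φū − z‖₂² > λ'·F(Dū') + (1/2)‖Φū' − z‖₂². -/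
open Matrix

/-- `g` is a majorizer of `f` that is exact at `x`: the surrogate minimized in place of `f` by a
majorization–minimization step from `x`. -/
structure IsMajorizerAt {α β : Type*} [LE β] (g f : α → β) (x : α) : Prop where
  le : ∀ y, f y ≤ g y
  apply_eq : g x = f x

/-- The penalized objective `lam * J u + G u` with penalty `J` and data-fidelity term `G`. The
paper's `P(λ, F(Du), u)` is the case `J u = F (D u)`, `G u = (1/2)‖Φu - z‖²`. -/
def penalizedObjective {X R : Type*} [Add R] [Mul R] (lam : R) (J G : X → R) (u : X) : R :=
  lam * J u + G u

namespace IsMajorizerAt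

theorem comp {α β γ : Type*} [LE β] {g f : α → β} {A : γ → α} {x : γ}
    (h : IsMajorizerAt g f (A x)) : IsMajorizerAt (g ∘ A) (f ∘ A) x where
  le y := h.le (A y)
  apply_eq := h.apply_eq

theorem apply_le_of_isMinOn {α β : Type*} [Preorder β] {g f : α → β} {x y : α}
    (h : IsMajorizerAt g f x) (hy : IsMinOn g Set.univ y) : f y ≤ f x :=
  calc
    f y ≤ g y := h.le y
    _ ≤ g x := isMinOn_univ_iff.mp hy x
    _ = f x := h.apply_eq

theorem penalizedObjective {X R : Type*} [Semiring R] [PartialOrder R] [IsOrderedRing R]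
    {S J : X → R} {u : X} {lam : R} (h : IsMajorizerAt S J u) (hlam : 0 ≤ lam) (G : X → R) :
    IsMajorizerAt (penalizedObjective lam S G) (penalizedObjective lam J G) u where
  le v := add_le_add_left (mul_le_mul_of_nonneg_left (h.le v) hlam) (G v)
  apply_eq := congrArg (lam * · + G u) h.apply_eq

end IsMajorizerAt

theorem penalizedObjective_lt_of_lt {X R : Type*} [Semiring R] [PartialOrder R]
    [IsStrictOrderedRing R] {lam lam' : R} {J : X → R} {u : X} (hlt : lam' < lam) (hJ : 0 < J u)
    (G : X → R) : penalizedObjective lam' J G u < penalizedObjective lam J G u :=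
  add_lt_add_left (mul_lt_mul_of_pos_right hlt hJ) (G u)

theorem stmt4_general {X R : Type*} [Semiring R] [PartialOrder R] [IsStrictOrderedRing R]
    {J S G : X → R} {lam lam' : R} {u u' : X} (hlt : lam' < lam) (hlam' : 0 ≤ lam')
    (hS : IsMajorizerAt S J u) (hJ : 0 < J u)
    (hmin : IsMinOn (penalizedObjective lam' S G) Set.univ u') :
    penalizedObjective lam' J G u' < penalizedObjective lam J G u :=
  calc
    penalizedObjective lam' J G u' ≤ penalizedObjective lam' J G u :=
      (hS.penalizedObjective hlam' G).apply_le_of_isMinOn hmin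
    _ < penalizedObjective lam J G u := penalizedObjective_lt_of_lt hlt hJ G

/-- Proposition A.1, descent property: if `𝓕` is an exact-at-`ū`
majorizer of `F`, `λ > λ' > 0`, `F(Dū) > 0` and `ū'` minimizes
`u ↦ λ' 𝓕(Du) + (1/2)‖Φu - z‖²`, then
`λ F(Dū) + (1/2)‖Φū - z‖² > λ' F(Dū') + (1/2)‖Φū' - z‖²`. -/
theorem stmt4 {m n d : ℕ} (Φ : Matrix (Fin m) (Fin n) ℝ) (z : Fin m → ℝ)
    (D : Matrix (Fin d) (Fin n) ℝ) (F 𝓕 : (Fin d → ℝ) → ℝ)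
    (lam lam' : ℝ) (hlt : lam' < lam) (hpos' : 0 < lam')
    (ub ub' : Fin n → ℝ)
    (hexact : 𝓕 (D.mulVec ub) = F (D.mulVec ub))
    (hmaj : ∀ w : Fin d → ℝ, F w ≤ 𝓕 w)
    (hFpos : 0 < F (D.mulVec ub))
    (hmin : ∀ u : Fin n → ℝ,
      lam' * 𝓕 (D.mulVec ub') + (1 / 2) * ∑ i, ((Φ.mulVec ub') i - z i) ^ 2 ≤
      lam' * 𝓕 (D.mulVec u) + (1 / 2) * ∑ i, ((Φ.mulVec u) i - z i) ^ 2) :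
    lam' * F (D.mulVec ub') + (1 / 2) * ∑ i, ((Φ.mulVec ub') i - z i) ^ 2 <
    lam * F (D.mulVec ub) + (1 / 2) * ∑ i, ((Φ.mulVec ub) i - z i) ^ 2 :=
  stmt4_general (G := fun u ↦ (1 / 2) * ∑ i, ((Φ.mulVec u) i - z i) ^ 2) hlt hpos'.le
    (IsMajorizerAt.comp (A := D.mulVec) ⟨hmaj, hexact⟩) hFpos (isMinOn_univ_iff.mpr hmin)
end

section
/- For μ > 0 define ψ_μ(t) = (1/log 2)·log( 2 / (1 + exp(−|t|/μ)) ). Then for every finite family of reals w₁, …, w_d, the sum Σᵢ ψ_μ(wᵢ) converges, as μ → 0⁺, to the number of indices i with wᵢ ≠ 0. -/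
/-- The sparsifying scalar function `ψ_μ(t) = (1/log 2) log(2/(1 + exp(-|t|/μ)))`. -/
noncomputable def psi (μ t : ℝ) : ℝ :=
  (1 / Real.log 2) * Real.log (2 / (1 + Real.exp (-|t| / μ)))

section

open Filter Topology

theorem psi_eq_one_sub_logb (μ t : ℝ) :
    psi μ t = 1 - Real.logb 2 (1 + Real.exp (-|t| / μ)) := by
  have hpos : 0 < 1 + Real.exp (-|t| / μ) := by positivity
  have hlog : Real.log 2 ≠ 0 := (Real.log_pos one_lt_two).ne'
  rw [psi, Real.log_div two_ne_zero hpos.ne', Real.logb]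
  field_simp

theorem psi_zero_right (μ : ℝ) : psi μ 0 = 0 := by
  norm_num [psi_eq_one_sub_logb]

theorem tendsto_exp_neg_div_nhdsGT_zero {a : ℝ} (ha : 0 < a) :
    Tendsto (fun μ => Real.exp (-a / μ)) (𝓝[>] 0) (𝓝 0) := by
  have hdiv : Tendsto (fun μ => -a / μ) (𝓝[>] 0) atBot := by
    simpa only [div_eq_mul_inv] using
      tendsto_inv_nhdsGT_zero.const_mul_atTop_of_neg (neg_neg_of_pos ha)
  exact Real.tendsto_exp_atBot.comp hdiv

theorem tendsto_psi_nhdsGT_zero {t : ℝ} (ht : t ≠ 0) :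
    Tendsto (fun μ => psi μ t) (𝓝[>] 0) (𝓝 1) := by
  have hexp : Tendsto (fun μ => 1 + Real.exp (-|t| / μ)) (𝓝[>] 0) (𝓝 1) := by
    simpa only [add_zero] using (tendsto_exp_neg_div_nhdsGT_zero (abs_pos.mpr ht)).const_add 1
  have hlogb : Tendsto (fun μ => Real.logb 2 (1 + Real.exp (-|t| / μ))) (𝓝[>] 0) (𝓝 0) := by
    simpa only [Real.logb_one] using hexp.logb one_ne_zero
  simpa only [psi_eq_one_sub_logb, sub_zero] using hlogb.const_sub 1

theorem stmt6_general {ι : Type*} (s : Finset ι) (w : ι → ℝ) [DecidablePred fun i => w i ≠ 0] :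
    Tendsto (fun μ => ∑ i ∈ s, psi μ (w i)) (𝓝[>] 0)
      (𝓝 ((s.filter (fun i => w i ≠ 0)).card : ℝ)) := by
  rw [Finset.card_filter, Nat.cast_sum]
  refine tendsto_finsetSum s fun i _ => ?_
  by_cases hi : w i = 0
  · simp [hi, psi_zero_right]
  · simpa [hi] using tendsto_psi_nhdsGT_zero hi

end

open Classical in
/-- for every finite family `w₁, …, w_d`, `∑ i, ψ_μ(wᵢ)` tends, as
`μ → 0⁺`, to the number of indices with `wᵢ ≠ 0`. -/
theorem stmt6 {d : ℕ} (w : Fin d → ℝ) :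
    Filter.Tendsto (fun μ => ∑ i, psi μ (w i)) (nhdsWithin 0 (Set.Ioi 0))
      (nhds ((Finset.univ.filter (fun i => w i ≠ 0)).card : ℝ)) :=
  stmt6_general Finset.univ w
end

section
/- For μ > 0 define ψ_μ(t) = (1/log 2)·log( 2 / (1 + exp(−|t|/μ)) ). Then ψ_μ is concave on the interval [0, ∞). -/
/-!
Log-sum-exp preserves convexity: subtracting its value from every exponent makes the exponentials
sum to one, so the convexity of `exp` can be summed over the terms. Hence `log (1 + exp f)` is
convex for every convex `f`, and on `[0, ∞)` the exponent `-|t|/μ` of `ψ_μ` is linear.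
-/

section LogSumExp

variable {ι : Type*} {t : Finset ι}

theorem log_sum_exp_le_iff (ht : t.Nonempty) {g : ι → ℝ} {c : ℝ} :
    Real.log (∑ i ∈ t, Real.exp (g i)) ≤ c ↔ ∑ i ∈ t, Real.exp (g i - c) ≤ 1 := by
  have sum_pos : 0 < ∑ i ∈ t, Real.exp (g i) := Finset.sum_pos (fun i _ ↦ Real.exp_pos _) ht
  simp only [Real.exp_sub, ← Finset.sum_div]
  rw [Real.log_le_iff_le_exp sum_pos, div_le_one (Real.exp_pos c)]

variable {E : Type*} [AddCommMonoid E] [SMul ℝ E] {s : Set E}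

theorem convexOn_log_sum_exp (ht : t.Nonempty) {f : ι → E → ℝ}
    (hf : ∀ i ∈ t, ConvexOn ℝ s (f i)) :
    ConvexOn ℝ s fun x ↦ Real.log (∑ i ∈ t, Real.exp (f i x)) := by
  obtain ⟨i₀, hi₀⟩ := ht
  refine ⟨(hf i₀ hi₀).1, fun x hx y hy a b ha hb hab ↦ ?_⟩
  set F : E → ℝ := fun x ↦ Real.log (∑ i ∈ t, Real.exp (f i x))
  have sum_le_one (z : E) : ∑ i ∈ t, Real.exp (f i z - F z) ≤ 1 :=
    (log_sum_exp_le_iff ⟨i₀, hi₀⟩).1 le_rfl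
  have term_le (i : ι) (hi : i ∈ t) :
      Real.exp (f i (a • x + b • y) - (a • F x + b • F y)) ≤
        a * Real.exp (f i x - F x) + b * Real.exp (f i y - F y) :=
    calc Real.exp (f i (a • x + b • y) - (a • F x + b • F y))
        ≤ Real.exp (a • f i x + b • f i y - (a • F x + b • F y)) := by
          gcongr
          exact (hf i hi).2 hx hy ha hb hab
      _ = Real.exp (a • (f i x - F x) + b • (f i y - F y)) := by
          simp only [smul_eq_mul]
          ring_nf
      _ ≤ a * Real.exp (f i x - F x) + b * Real.exp (f i y - F y) :=
          convexOn_exp.2 (Set.mem_univ _) (Set.mem_univ _) ha hb hab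
  refine (log_sum_exp_le_iff ⟨i₀, hi₀⟩).2 ?_
  calc ∑ i ∈ t, Real.exp (f i (a • x + b • y) - (a • F x + b • F y))
      ≤ ∑ i ∈ t, (a * Real.exp (f i x - F x) + b * Real.exp (f i y - F y)) :=
        Finset.sum_le_sum term_le
    _ = a * ∑ i ∈ t, Real.exp (f i x - F x) + b * ∑ i ∈ t, Real.exp (f i y - F y) := by
        rw [Finset.sum_add_distrib, Finset.mul_sum, Finset.mul_sum]
    _ ≤ a * 1 + b * 1 := by
        gcongr
        exacts [sum_le_one x, sum_le_one y]
    _ = 1 := by rw [mul_one, mul_one, hab]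

theorem convexOn_log_one_add_exp {f : E → ℝ} (hf : ConvexOn ℝ s f) :
    ConvexOn ℝ s fun x ↦ Real.log (1 + Real.exp (f x)) := by
  have convexOn_exponents : ∀ i ∈ (Finset.univ : Finset (Fin 2)),
      ConvexOn ℝ s ((![fun _ ↦ 0, f] : Fin 2 → E → ℝ) i) := by
    simpa [Fin.forall_fin_two] using And.intro (convexOn_const 0 hf.1) hf
  simpa [Fin.sum_univ_two] using convexOn_log_sum_exp Finset.univ_nonempty convexOn_exponents

theorem stmt8_general {f : E → ℝ} (hf : ConvexOn ℝ s f) :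
    ConcaveOn ℝ s fun x ↦ (1 / Real.log 2) * Real.log (2 / (1 + Real.exp (f x))) := by
  have log_two_div (x : E) :
      Real.log (2 / (1 + Real.exp (f x))) = Real.log 2 - Real.log (1 + Real.exp (f x)) :=
    Real.log_div two_ne_zero (by positivity)
  have hconcave : ConcaveOn ℝ s fun x ↦ Real.log 2 - Real.log (1 + Real.exp (f x)) :=
    (concaveOn_const (Real.log 2) hf.1).sub (convexOn_log_one_add_exp hf)
  simp only [log_two_div]
  exact hconcave.smul (one_div_nonneg.2 (Real.log_nonneg one_le_two))

end LogSumExp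

theorem convexOn_mul_abs_Ici (c : ℝ) : ConvexOn ℝ (Set.Ici 0) fun t : ℝ ↦ c * |t| :=
  ((LinearMap.mulLeft ℝ c).convexOn (convex_Ici 0)).congr fun t ht ↦ by
    rw [LinearMap.mulLeft_apply, abs_of_nonneg ht]

/-- for `μ > 0`, `ψ_μ` is concave on `[0, ∞)`. -/
theorem stmt8 (μ : ℝ) (hμ : 0 < μ) :
    ConcaveOn ℝ (Set.Ici (0 : ℝ)) (psi μ) := by
  have convexOn_exponent : ConvexOn ℝ (Set.Ici (0 : ℝ)) fun t ↦ -|t| / μ :=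
    (convexOn_mul_abs_Ici (-μ⁻¹)).congr fun t _ ↦ by ring
  exact stmt8_general convexOn_exponent
end

section
/- For μ > 0 define ψ_μ(t) = (1/log 2)·log( 2 / (1 + exp(−|t|/μ)) ). Then for all s ≥ 0 and t ≥ 0: ψ_μ(s) ≤ ψ_μ(t) + (1 / ( μ · (log 2) · (1 + exp(t/μ)) ))·(s − t); that is, the first-order linearization of ψ_μ at any point t ≥ 0 majorizes ψ_μ on [0, ∞). -/
/-!
Up to an additive constant, `ψ_μ(t)` is the base `2` logarithm of the logistic function
`σ(x) = 1 / (1 + exp (-x))` at `x = |t| / μ`. Jensen's inequality for `exp` at the points `0` and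
`y - x` with weights `σ(y)` and `σ(-y)` shows that the graph of `log ∘ σ` lies below its tangent at
`y`, whose slope is `σ(-y)`. Since `σ` is increasing, replacing `|t|` by `t` gives a smooth function
on the whole line that lies below `ψ_μ` and agrees with it for `t ≥ 0`.
-/

open Real

theorem exp_sigmoid_neg_mul_sub_le (x y : ℝ) :
    exp (sigmoid (-y) * (y - x)) ≤ sigmoid y / sigmoid x := by
  have jensen : exp (sigmoid y * 0 + sigmoid (-y) * (y - x)) ≤
      sigmoid y * exp 0 + sigmoid (-y) * exp (y - x) :=
    convexOn_exp.2 (Set.mem_univ 0) (Set.mem_univ (y - x)) (sigmoid_nonneg y)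
      (sigmoid_nonneg (-y)) (by rw [sigmoid_neg, add_sub_cancel])
  calc exp (sigmoid (-y) * (y - x))
      ≤ sigmoid y + sigmoid (-y) * exp (y - x) := by simpa using jensen
    _ = sigmoid y * (1 + exp (-y) * exp (y - x)) := by rw [← sigmoid_mul_rexp_neg]; ring
    _ = sigmoid y * (1 + exp (-x)) := by rw [← exp_add]; ring_nf
    _ = sigmoid y / sigmoid x := by rw [sigmoid_def x, div_inv_eq_mul]

theorem log_sigmoid_le_tangent (x y : ℝ) :
    log (sigmoid x) ≤ log (sigmoid y) + sigmoid (-y) * (x - y) := by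
  have slope_le : sigmoid (-y) * (y - x) ≤ log (sigmoid y) - log (sigmoid x) := by
    rw [← log_div (sigmoid_pos y).ne' (sigmoid_pos x).ne']
    exact (le_log_iff_exp_le (div_pos (sigmoid_pos y) (sigmoid_pos x))).2
      (exp_sigmoid_neg_mul_sub_le x y)
  linarith

theorem logb_sigmoid_le_tangent {b : ℝ} (hb : 1 < b) (x y : ℝ) :
    logb b (sigmoid x) ≤ logb b (sigmoid y) + sigmoid (-y) / log b * (x - y) :=
  calc logb b (sigmoid x)
      ≤ (log (sigmoid y) + sigmoid (-y) * (x - y)) / log b :=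
        div_le_div_of_nonneg_right (log_sigmoid_le_tangent x y) (log_pos hb).le
    _ = logb b (sigmoid y) + sigmoid (-y) / log b * (x - y) := by
        rw [add_div, log_div_log, mul_div_right_comm]

theorem psi_eq_one_add_logb_sigmoid (μ t : ℝ) :
    psi μ t = 1 + logb 2 (sigmoid (|t| / μ)) := by
  have hlog : log 2 ≠ 0 := (log_pos one_lt_two).ne'
  rw [psi, neg_div, div_eq_mul_inv 2, ← sigmoid_def, log_mul two_ne_zero (sigmoid_pos _).ne',
    mul_add, one_div_mul_cancel hlog, one_div_mul_eq_div, log_div_log]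

theorem one_add_logb_sigmoid_le_psi {μ : ℝ} (hμ : 0 ≤ μ) (t : ℝ) :
    1 + logb 2 (sigmoid (t / μ)) ≤ psi μ t := by
  rw [psi_eq_one_add_logb_sigmoid]
  gcongr
  · exact one_lt_two
  · exact sigmoid_pos _
  · exact le_abs_self t

theorem stmt11_general {μ s : ℝ} (hμ : 0 < μ) (hs : 0 ≤ s) (t : ℝ) :
    psi μ s ≤ psi μ t + 1 / (μ * log 2 * (1 + exp (t / μ))) * (s - t) := by
  have slope_eq : sigmoid (-(t / μ)) / log 2 * (s / μ - t / μ) =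
      1 / (μ * log 2 * (1 + exp (t / μ))) * (s - t) := by
    rw [sigmoid_def, neg_neg]
    field_simp
  calc psi μ s
      = 1 + logb 2 (sigmoid (s / μ)) := by rw [psi_eq_one_add_logb_sigmoid, abs_of_nonneg hs]
    _ ≤ 1 + (logb 2 (sigmoid (t / μ)) + sigmoid (-(t / μ)) / log 2 * (s / μ - t / μ)) := by
        gcongr
        exact logb_sigmoid_le_tangent one_lt_two _ _
    _ = 1 + logb 2 (sigmoid (t / μ)) + 1 / (μ * log 2 * (1 + exp (t / μ))) * (s - t) := by
        rw [slope_eq, add_assoc]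
    _ ≤ psi μ t + 1 / (μ * log 2 * (1 + exp (t / μ))) * (s - t) := by
        gcongr
        exact one_add_logb_sigmoid_le_psi hμ.le t

/-- for `μ > 0` and `s, t ≥ 0`, the first-order linearization of `ψ_μ`
at `t` majorizes `ψ_μ(s)`:
`ψ_μ(s) ≤ ψ_μ(t) + ψ'_μ(t)(s - t)` with `ψ'_μ(t) = 1/(μ (log 2)(1 + exp(t/μ)))`. -/
theorem stmt11 (μ : ℝ) (hμ : 0 < μ) :
    ∀ s t : ℝ, 0 ≤ s → 0 ≤ t →
      psi μ s ≤ psi μ t + (1 / (μ * Real.log 2 * (1 + Real.exp (t / μ)))) * (s - t) :=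
  fun _ t hs _ ↦ stmt11_general hμ hs t
end

section
/- For μ > 0 define ψ_μ(t) = (1/log 2)·log( 2 / (1 + exp(−|t|/μ)) ) and, for w ∈ ℝᵈ, F_μ(w) = Σᵢ ψ_μ(|wᵢ|). Fix w̄ ∈ ℝᵈ and define the linearized functional 𝓕(w) = F_μ(w̄) + Σᵢ ψ′_μ(|w̄ᵢ|)·(|wᵢ| − |w̄ᵢ|), where ψ′_μ(t) = 1/( μ·(log 2)·(1 + exp(t/μ)) ). Then 𝓕(w̄) = F_μ(w̄) and 𝓕(w) ≥ F_μ(w) for every w ∈ ℝᵈ. -/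
/-- Its derivative on `(0, ∞)`: `ψ'_μ(t) = 1/(μ (log 2)(1 + exp(t/μ)))`. -/
noncomputable def psi' (μ t : ℝ) : ℝ :=
  1 / (μ * Real.log 2 * (1 + Real.exp (t / μ)))

/-- `F_μ(w) = ∑ i, ψ_μ(|wᵢ|)`. -/
noncomputable def Fmu {d : ℕ} (μ : ℝ) (w : Fin d → ℝ) : ℝ :=
  ∑ i, psi μ |w i|

/-! On `[0, ∞)`, `ψ_μ(t) = log₂ σ(t/μ) + 1` with `σ` the sigmoid function. Since `log ∘ σ` has the
decreasing derivative `x ↦ σ(-x)`, `ψ_μ` is concave on `[0, ∞)` with derivative `ψ'_μ`, so it lies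
below its tangents there. -/

open Set Real

lemma le_tangent_of_concaveOn {s : Set ℝ} {f : ℝ → ℝ} {f' x y : ℝ} (hf : ConcaveOn ℝ s f)
    (hx : x ∈ s) (hy : y ∈ s) (hf' : HasDerivWithinAt f f' s x) :
    f y ≤ f x + f' * (y - x) := by
  rcases lt_trichotomy x y with hxy | rfl | hyx
  · have hslope : slope f x y ≤ f' := hf.slope_le_of_hasDerivWithinAt hx hy hxy hf'
    rw [slope_def_field, div_le_iff₀ (sub_pos.2 hxy)] at hslope
    linarith
  · simp
  · have hslope : f' ≤ slope f y x := hf.le_slope_of_hasDerivWithinAt hy hx hyx hf'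
    rw [slope_def_field, le_div_iff₀ (sub_pos.2 hyx)] at hslope
    linarith

lemma hasDerivAt_log_sigmoid (x : ℝ) :
    HasDerivAt (fun y => log (sigmoid y)) (sigmoid (-x)) x := by
  have hσ : sigmoid x ≠ 0 := (sigmoid_pos x).ne'
  simpa only [sigmoid_neg, mul_div_cancel_left₀ _ hσ] using (hasDerivAt_sigmoid x).log hσ

lemma concaveOn_log_sigmoid : ConcaveOn ℝ univ fun x => log (sigmoid x) := by
  refine Antitone.concaveOn_univ_of_deriv
    (fun x => (hasDerivAt_log_sigmoid x).differentiableAt) ?_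
  rw [deriv_eq hasDerivAt_log_sigmoid]
  exact fun _ _ hxy => sigmoid_le (neg_le_neg hxy)

lemma psi_eq_of_nonneg (μ : ℝ) {t : ℝ} (ht : 0 ≤ t) :
    psi μ t = log (sigmoid (μ⁻¹ * t)) / log 2 + 1 := by
  have hlog : log 2 ≠ 0 := (log_pos one_lt_two).ne'
  have hσ : sigmoid (μ⁻¹ * t) = (1 + exp (-t / μ))⁻¹ := by
    rw [sigmoid_def, neg_div, div_eq_inv_mul]
  rw [psi, abs_of_nonneg ht, div_eq_mul_inv 2, ← hσ, log_mul two_ne_zero (sigmoid_pos _).ne']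
  field_simp
  ring

lemma concaveOn_psi (μ : ℝ) : ConcaveOn ℝ (Ici 0) (psi μ) := by
  have hcomp : ConcaveOn ℝ (Ici 0) fun t => log (sigmoid (μ⁻¹ * t)) :=
    (concaveOn_log_sigmoid.comp_linearMap (LinearMap.mulLeft ℝ μ⁻¹)).subset
      (subset_univ _) (convex_Ici 0)
  have hscaled := (hcomp.smul (inv_nonneg.2 (log_pos one_lt_two).le)).add_const 1
  refine hscaled.congr fun t ht => ?_
  simp only [psi_eq_of_nonneg μ ht, Pi.add_apply, smul_eq_mul, div_eq_inv_mul]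

lemma hasDerivWithinAt_psi {μ t : ℝ} (hμ : μ ≠ 0) (ht : 0 ≤ t) :
    HasDerivWithinAt (psi μ) (psi' μ t) (Ici 0) t := by
  have hlog : log 2 ≠ 0 := (log_pos one_lt_two).ne'
  have hσ : sigmoid (-(μ⁻¹ * t)) = (1 + exp (t / μ))⁻¹ := by
    rw [sigmoid_def, neg_neg, div_eq_inv_mul]
  have hderiv : HasDerivAt (fun s => log (sigmoid (μ⁻¹ * s)) / log 2 + 1)
      (sigmoid (-(μ⁻¹ * t)) * μ⁻¹ / log 2) t :=
    (((hasDerivAt_log_sigmoid _).comp t (hasDerivAt_const_mul μ⁻¹)).div_const _).add_const 1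
  have hpsi' : sigmoid (-(μ⁻¹ * t)) * μ⁻¹ / log 2 = psi' μ t := by
    rw [hσ, psi']
    field_simp
  rw [← hpsi']
  exact hderiv.hasDerivWithinAt.congr (fun _ hs => psi_eq_of_nonneg μ hs) (psi_eq_of_nonneg μ ht)

theorem stmt12_general {d : ℕ} {μ : ℝ} (hμ : μ ≠ 0) (wbar : Fin d → ℝ) :
    (Fmu μ wbar + ∑ i, psi' μ |wbar i| * (|wbar i| - |wbar i|) = Fmu μ wbar) ∧
    (∀ w : Fin d → ℝ,
      Fmu μ w ≤ Fmu μ wbar + ∑ i, psi' μ |wbar i| * (|w i| - |wbar i|)) := by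
  refine ⟨by simp, fun w => ?_⟩
  rw [Fmu, Fmu, ← Finset.sum_add_distrib]
  exact Finset.sum_le_sum fun i _ => le_tangent_of_concaveOn (concaveOn_psi μ)
    (mem_Ici.2 (abs_nonneg _)) (mem_Ici.2 (abs_nonneg _)) (hasDerivWithinAt_psi hμ (abs_nonneg _))

/-- the linearization `𝓕(w) = F_μ(w̄) + ∑ i ψ'_μ(|w̄ᵢ|)(|wᵢ| - |w̄ᵢ|)`
of `F_μ` at `w̄` coincides with `F_μ` at `w̄` and majorizes `F_μ` everywhere. -/
theorem stmt12 {d : ℕ} (μ : ℝ) (hμ : 0 < μ) (wbar : Fin d → ℝ) :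
    (Fmu μ wbar + ∑ i, psi' μ |wbar i| * (|wbar i| - |wbar i|) = Fmu μ wbar) ∧
    (∀ w : Fin d → ℝ,
      Fmu μ w ≤ Fmu μ wbar + ∑ i, psi' μ |wbar i| * (|w i| - |wbar i|)) := by
  exact stmt12_general hμ.ne' wbar
end
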